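/- arXiv:2204.14126 — 3 statements merged into one kernel-verified Lean document; each statement's English description precedes it below -/
import Mathlib

section
/- Let g : ℝ → ℝ be given on [0,1] by a convergent power series g(z) = ∑_{i=0}^∞ a_i z^i with a_i ≥ 0 for all i, with g(0) = 0 and g'(0) = a where 0 < a < 1, and suppose g(z) < z for all z ∈ (0,d]. Let b > 1, let 0 < d < 1, and define f : [0,1] → ℝ by f(z) = g(z) for z ∈ [0,d] and f(z) = 1 - b·(1-z) for z ∈ (d,1]; assume f is strictly monotonically increasing on [0,1]. Then for every z ∈ (d,1) the limit ℓ(z) := lim_{L→∞} f^[L](z)/a^L exists and is nonnegative; moreover, with β = -log a / log b (> 0), the function z ↦ (1-z)^β · ℓ(z) is bounded above on (d,1), and there exist ε > 0 and δ > 0 such that (1-z)^β · ℓ(z) ≥ δ for all z ∈ (1-ε,1). -/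
open Filter Set

/-!
Near `0` the map behaves like `x ↦ a x` up to a quadratic error and its orbits decay
geometrically, so `f^[L] x / a ^ L` increases to a limit comparable with `x` (Koenigs
linearization). Near the repelling fixed point `p = 1` an orbit has its distance to `p` multiplied
by `b` at each step, until after `n` steps it lands in a fixed interval `(p - b (p - d), d]` that
is bounded away from `0` and `p`. Compared with its value at the landing point, `ℓ z` is divided by
`a ^ n`, while `(p - z) ^ β` is multiplied by `a ^ n`, because `b ^ β = a⁻¹`. Hence
`(p - z) ^ β * ℓ z` is determined by the landing point, where both factors are bounded above
and away from `0`.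
-/

section PowerSeries

variable {c : ℕ → ℝ} {d s t z : ℝ}

lemma coeff_one_mul_le_of_hasSum (hc : ∀ i, 0 ≤ c i) (hz : 0 ≤ z)
    (hs : HasSum (fun i => c i * z ^ i) s) : c 1 * z ≤ s := by
  simpa using le_hasSum hs 1 fun i _ => mul_nonneg (hc i) (pow_nonneg hz i)

lemma le_mul_div_pow_of_hasSum {m : ℕ} (hc : ∀ i, 0 ≤ c i) (hm : ∀ i < m, c i = 0) (hd : 0 < d)
    (hz : z ∈ Icc 0 d) (hs : HasSum (fun i => c i * z ^ i) s)
    (ht : HasSum (fun i => c i * d ^ i) t) : s ≤ t * (z / d) ^ m := by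
  refine hasSum_le (fun i => ?_) hs (ht.mul_right _)
  rcases lt_or_ge i m with hi | hi
  · simp [hm i hi]
  · have hratio : (z / d) ^ i ≤ (z / d) ^ m :=
      pow_le_pow_of_le_one (div_nonneg hz.1 hd.le) (div_le_one_of_le₀ hz.2 hd.le) hi
    calc c i * z ^ i = c i * d ^ i * (z / d) ^ i := by rw [div_pow]; field_simp
      _ ≤ c i * d ^ i * (z / d) ^ m :=
        mul_le_mul_of_nonneg_left hratio (mul_nonneg (hc i) (pow_nonneg hd.le i))

lemma hasSum_update_one_zero (hs : HasSum (fun i => c i * z ^ i) s) :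
    HasSum (fun i => Function.update c 1 0 i * z ^ i) (s - c 1 * z) := by
  have hterms : (fun i => Function.update c 1 0 i * z ^ i) =
      Function.update (fun i => c i * z ^ i) 1 0 := by
    ext i
    rcases eq_or_ne i 1 with rfl | hi <;> simp [*]
  rw [hterms]
  simpa [sub_eq_neg_add] using hs.update 1 0

end PowerSeries

/-- `0` is an attracting fixed point of `f` on `[0, d]` with multiplier `a`, where `f` lies above
its tangent `x ↦ a * x`, by at most `K * x ^ 2`, and contracts towards `0` with ratio `q < 1`.
These are the bounds that the linearization of `f` at `0` needs. -/
structure IsKoenigsContraction (f : ℝ → ℝ) (a K q d : ℝ) : Prop where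
  radius_pos : 0 < d
  multiplier_pos : 0 < a
  ratio_lt_one : q < 1
  mul_le : ∀ x ∈ Icc 0 d, a * x ≤ f x
  le_add_sq : ∀ x ∈ Icc 0 d, f x ≤ a * x + K * x ^ 2
  le_mul : ∀ x ∈ Icc 0 d, f x ≤ q * x

namespace IsKoenigsContraction

variable {f : ℝ → ℝ} {a K q d x : ℝ}

lemma of_hasSum {c : ℕ → ℝ} (hc : ∀ i, 0 ≤ c i) (hc0 : c 0 = 0) (hc1 : 0 < c 1) (hd : 0 < d)
    (hf : ∀ z ∈ Icc 0 d, HasSum (fun i => c i * z ^ i) (f z)) (hfd : f d < d) :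
    IsKoenigsContraction f (c 1) ((f d - c 1 * d) / d ^ 2) (f d / d) d where
  radius_pos := hd
  multiplier_pos := hc1
  ratio_lt_one := (div_lt_one hd).2 hfd
  mul_le z hz := coeff_one_mul_le_of_hasSum hc hz.1 (hf z hz)
  le_add_sq z hz := by
    have hupdate : ∀ i, 0 ≤ Function.update c 1 0 i :=
      fun i => by rcases eq_or_ne i 1 with rfl | hi <;> simp [*]
    have hzero : ∀ i < 2, Function.update c 1 0 i = 0 := fun i hi => by
      interval_cases i <;> simp [hc0]
    have htail : f z - c 1 * z ≤ (f d - c 1 * d) * (z / d) ^ 2 :=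
      le_mul_div_pow_of_hasSum hupdate hzero hd hz (hasSum_update_one_zero (hf z hz))
        (hasSum_update_one_zero (hf d (right_mem_Icc.2 hd.le)))
    calc f z ≤ c 1 * z + (f d - c 1 * d) * (z / d) ^ 2 := by linarith
      _ = c 1 * z + (f d - c 1 * d) / d ^ 2 * z ^ 2 := by ring
  le_mul z hz := by
    have hchord : f z ≤ f d * (z / d) ^ 1 :=
      le_mul_div_pow_of_hasSum hc (by simpa using hc0) hd hz (hf z hz)
        (hf d (right_mem_Icc.2 hd.le))
    exact hchord.trans_eq (by ring)

lemma right_mem (h : IsKoenigsContraction f a K q d) : d ∈ Icc 0 d :=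
  right_mem_Icc.2 h.radius_pos.le

lemma multiplier_le_ratio (h : IsKoenigsContraction f a K q d) : a ≤ q :=
  le_of_mul_le_mul_right ((h.mul_le d h.right_mem).trans (h.le_mul d h.right_mem)) h.radius_pos

lemma ratio_pos (h : IsKoenigsContraction f a K q d) : 0 < q :=
  h.multiplier_pos.trans_le h.multiplier_le_ratio

lemma quadratic_coeff_nonneg (h : IsKoenigsContraction f a K q d) : 0 ≤ K := by
  have herror : 0 ≤ K * d ^ 2 := by linarith [h.mul_le d h.right_mem, h.le_add_sq d h.right_mem]
  exact nonneg_of_mul_nonneg_left herror (pow_pos h.radius_pos 2)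

lemma mapsTo (h : IsKoenigsContraction f a K q d) : MapsTo f (Icc 0 d) (Icc 0 d) := fun x hx =>
  ⟨(mul_nonneg h.multiplier_pos.le hx.1).trans (h.mul_le x hx),
    (h.le_mul x hx).trans ((mul_le_of_le_one_left hx.1 h.ratio_lt_one.le).trans hx.2)⟩

lemma iterate_mem (h : IsKoenigsContraction f a K q d) (hx : x ∈ Icc 0 d) (L : ℕ) :
    f^[L] x ∈ Icc 0 d :=
  h.mapsTo.iterate L hx

lemma iterate_le_pow_mul (h : IsKoenigsContraction f a K q d) (hx : x ∈ Icc 0 d) (L : ℕ) :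
    f^[L] x ≤ q ^ L * x := by
  induction L with
  | zero => simp
  | succ L ih =>
    calc f^[L + 1] x = f (f^[L] x) := Function.iterate_succ_apply' f L x
      _ ≤ q * f^[L] x := h.le_mul _ (h.iterate_mem hx L)
      _ ≤ q * (q ^ L * x) := mul_le_mul_of_nonneg_left ih h.ratio_pos.le
      _ = q ^ (L + 1) * x := by ring

lemma monotone_iterate_div_pow (h : IsKoenigsContraction f a K q d) (hx : x ∈ Icc 0 d) :
    Monotone fun L => f^[L] x / a ^ L := by
  have ha := h.multiplier_pos
  refine monotone_nat_of_le_succ fun L => ?_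
  calc f^[L] x / a ^ L = a * f^[L] x / a ^ (L + 1) := by rw [pow_succ]; field_simp
    _ ≤ f^[L + 1] x / a ^ (L + 1) := by
      rw [Function.iterate_succ_apply']
      gcongr
      exact h.mul_le _ (h.iterate_mem hx L)

lemma iterate_succ_div_pow_le (h : IsKoenigsContraction f a K q d) (hx : x ∈ Icc 0 d) (L : ℕ) :
    f^[L + 1] x / a ^ (L + 1) ≤ f^[L] x / a ^ L * Real.exp (K * x / a * q ^ L) := by
  have ha := h.multiplier_pos
  have hK := h.quadratic_coeff_nonneg
  have hmem := h.iterate_mem hx L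
  have hfactor : 1 + K / a * f^[L] x ≤ Real.exp (K * x / a * q ^ L) := by
    calc 1 + K / a * f^[L] x ≤ 1 + K / a * (q ^ L * x) := by
          gcongr
          exact h.iterate_le_pow_mul hx L
      _ = K * x / a * q ^ L + 1 := by ring
      _ ≤ Real.exp (K * x / a * q ^ L) := Real.add_one_le_exp _
  calc f^[L + 1] x / a ^ (L + 1)
      ≤ (a * f^[L] x + K * f^[L] x ^ 2) / a ^ (L + 1) := by
        rw [Function.iterate_succ_apply']
        gcongr
        exact h.le_add_sq _ hmem
    _ = f^[L] x / a ^ L * (1 + K / a * f^[L] x) := by rw [pow_succ a]; field_simp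
    _ ≤ f^[L] x / a ^ L * Real.exp (K * x / a * q ^ L) :=
        mul_le_mul_of_nonneg_left hfactor (div_nonneg hmem.1 (pow_pos ha L).le)

lemma iterate_div_pow_le (h : IsKoenigsContraction f a K q d) (hx : x ∈ Icc 0 d) (L : ℕ) :
    f^[L] x / a ^ L ≤ x * Real.exp (K * x / (a * (1 - q))) := by
  have ha := h.multiplier_pos
  have hq : 0 < 1 - q := sub_pos.2 h.ratio_lt_one
  have hconst : 0 ≤ K * x / (a * (1 - q)) :=
    div_nonneg (mul_nonneg h.quadratic_coeff_nonneg hx.1) (mul_pos ha hq).le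
  -- `(1 - q ^ L) / (1 - q)` is the partial geometric sum of the exponents of the single steps.
  have hpartial : f^[L] x / a ^ L ≤ x * Real.exp (K * x / (a * (1 - q)) * (1 - q ^ L)) := by
    induction L with
    | zero => simp
    | succ L ih =>
      calc f^[L + 1] x / a ^ (L + 1)
          ≤ f^[L] x / a ^ L * Real.exp (K * x / a * q ^ L) := h.iterate_succ_div_pow_le hx L
        _ ≤ x * Real.exp (K * x / (a * (1 - q)) * (1 - q ^ L)) * Real.exp (K * x / a * q ^ L) :=
            mul_le_mul_of_nonneg_right ih (Real.exp_pos _).le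
        _ = x * Real.exp (K * x / (a * (1 - q)) * (1 - q ^ (L + 1))) := by
            rw [mul_assoc, ← Real.exp_add]
            congr 2
            field_simp
            ring
  refine hpartial.trans (mul_le_mul_of_nonneg_left (Real.exp_le_exp.2 ?_) hx.1)
  exact mul_le_of_le_one_right hconst (sub_le_self 1 (pow_pos h.ratio_pos L).le)

theorem exists_tendsto_iterate_div_pow (h : IsKoenigsContraction f a K q d) (hx : x ∈ Icc 0 d) :
    ∃ l ∈ Icc x (x * Real.exp (K * x / (a * (1 - q)))),
      Tendsto (fun L => f^[L] x / a ^ L) atTop (nhds l) := by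
  have hmono := h.monotone_iterate_div_pow hx
  have hlim := tendsto_atTop_ciSup hmono ⟨_, forall_mem_range.2 (h.iterate_div_pow_le hx)⟩
  exact ⟨_, ⟨by simpa using hmono.ge_of_tendsto hlim 0,
    le_of_tendsto' hlim (h.iterate_div_pow_le hx)⟩, hlim⟩

end IsKoenigsContraction

lemma tendsto_iterate_div_pow_of_iterate {f : ℝ → ℝ} {a l z : ℝ} (n : ℕ)
    (h : Tendsto (fun L => f^[L] (f^[n] z) / a ^ L) atTop (nhds l)) :
    Tendsto (fun L => f^[L] z / a ^ L) atTop (nhds (l / a ^ n)) := by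
  rw [← tendsto_add_atTop_iff_nat n]
  refine (h.div_const (a ^ n)).congr fun L => ?_
  rw [Function.iterate_add_apply, pow_add, div_div]

section ExpandingBranch

variable {f : ℝ → ℝ} {b d p z : ℝ}

lemma sub_iterate_eq_pow_mul (hb : 0 ≤ b) (hf : ∀ z ∈ Ioc d p, f z = p - b * (p - z)) (hz : z ≤ p)
    {n : ℕ} (h : ∀ j < n, d < f^[j] z) : p - f^[n] z = b ^ n * (p - z) := by
  induction n with
  | zero => simp
  | succ n ih =>
    have hn : p - f^[n] z = b ^ n * (p - z) := ih fun j hj => h j (hj.trans n.lt_succ_self)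
    have hle : f^[n] z ≤ p :=
      sub_nonneg.1 (hn ▸ mul_nonneg (pow_nonneg hb n) (sub_nonneg.2 hz))
    rw [Function.iterate_succ_apply', hf _ ⟨h n n.lt_succ_self, hle⟩, hn]
    ring

lemma exists_iterate_le (hb : 1 < b) (hf : ∀ z ∈ Ioc d p, f z = p - b * (p - z)) (hz : z < p) :
    ∃ n, f^[n] z ≤ d := by
  by_contra! hstay
  obtain ⟨n, hn⟩ := pow_unbounded_of_one_lt ((p - d) / (p - z)) hb
  rw [div_lt_iff₀ (sub_pos.2 hz),
    ← sub_iterate_eq_pow_mul (zero_le_one.trans hb.le) hf hz.le fun j _ => hstay j] at hn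
  linarith [hstay n]

lemma exists_iterate_mem_Ioc (hb : 1 < b) (hf : ∀ z ∈ Ioc d p, f z = p - b * (p - z))
    (hz : z ∈ Ioo d p) :
    ∃ n, f^[n] z ∈ Ioc (p - b * (p - d)) d ∧ p - f^[n] z = b ^ n * (p - z) := by
  classical
  have hb0 : 0 < b := zero_lt_one.trans hb
  have hexit := exists_iterate_le hb hf hz.2
  have hbefore : ∀ j < Nat.find hexit, d < f^[j] z := fun j hj => not_le.1 (Nat.find_min hexit hj)
  have hdist := sub_iterate_eq_pow_mul hb0.le hf hz.2.le hbefore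
  refine ⟨Nat.find hexit, ⟨?_, Nat.find_spec hexit⟩, hdist⟩
  obtain ⟨m, hm⟩ : ∃ m, Nat.find hexit = m + 1 :=
    Nat.exists_eq_succ_of_ne_zero ((Nat.find_pos hexit).2 (not_le.2 hz.1)).ne'
  rw [hm] at hbefore hdist ⊢
  have hlast : p - f^[m] z = b ^ m * (p - z) :=
    sub_iterate_eq_pow_mul hb0.le hf hz.2.le fun j hj => hbefore j (hj.trans m.lt_succ_self)
  have hstep : p - f^[m + 1] z = b * (p - f^[m] z) := by rw [hdist, hlast]; ring
  have hfar : b * (p - f^[m] z) < b * (p - d) := by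
    gcongr
    exact hbefore m m.lt_succ_self
  linarith

lemma le_sub_mul_sub_of_monotoneOn (hf : ∀ z ∈ Ioc d p, f z = p - b * (p - z)) (hdp : d < p)
    (hmono : MonotoneOn f (Icc d p)) : f d ≤ p - b * (p - d) := by
  have hcont : Continuous fun z => p - b * (p - z) := by fun_prop
  refine ge_of_tendsto (hcont.continuousWithinAt (s := Ioi d)) ?_
  filter_upwards [Ioc_mem_nhdsGT hdp] with z hz
  exact hf z hz ▸ hmono (left_mem_Icc.2 hdp.le) (Ioc_subset_Icc_self hz) hz.1.le

lemma IsKoenigsContraction.mul_sub_lt_of_monotoneOn {a K q : ℝ}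
    (h : IsKoenigsContraction f a K q d) (hf : ∀ z ∈ Ioc d p, f z = p - b * (p - z)) (hdp : d < p)
    (hmono : MonotoneOn f (Icc d p)) : b * (p - d) < p := by
  have hfd : 0 < f d := (mul_pos h.multiplier_pos h.radius_pos).trans_le (h.mul_le d h.right_mem)
  exact sub_pos.1 (hfd.trans_le (le_sub_mul_sub_of_monotoneOn hf hdp hmono))

end ExpandingBranch

lemma rpow_neg_log_div_log {a b : ℝ} (ha : 0 < a) (hb : 1 < b) :
    b ^ (-Real.log a / Real.log b) = a⁻¹ := by
  have hb0 : 0 < b := zero_lt_one.trans hb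
  rw [neg_div, Real.log_div_log, Real.rpow_neg hb0.le, Real.rpow_logb hb0 hb.ne' ha]

lemma pow_mul_rpow_of_rpow_eq_inv {a b x β : ℝ} (hb : 0 ≤ b) (hx : 0 ≤ x) (hβ : b ^ β = a⁻¹)
    (n : ℕ) : (b ^ n * x) ^ β = x ^ β / a ^ n := by
  rw [Real.mul_rpow (pow_nonneg hb n) hx, ← Real.rpow_pow_comm hb, hβ, inv_pow, mul_comm,
    div_eq_mul_inv]

theorem IsKoenigsContraction.exists_tendsto_rpow_mul_mem_Icc {f : ℝ → ℝ} {a b d p K q z β : ℝ}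
    (h : IsKoenigsContraction f a K q d) (hb : 1 < b) (hβ : b ^ β = a⁻¹) (hbd : b * (p - d) ≤ p)
    (hf : ∀ z ∈ Ioc d p, f z = p - b * (p - z)) (hz : z ∈ Ioo d p) :
    ∃ l, (Tendsto (fun L => f^[L] z / a ^ L) atTop (nhds l) ∧ 0 ≤ l) ∧
      (p - z) ^ β * l ∈ Icc ((p - d) ^ β * (p - b * (p - d)))
        (p ^ β * (d * Real.exp (K * d / (a * (1 - q))))) := by
  have ha := h.multiplier_pos
  have hd := h.radius_pos
  have hK := h.quadratic_coeff_nonneg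
  have hq : 0 < 1 - q := sub_pos.2 h.ratio_lt_one
  have hpd : 0 ≤ p - d := (sub_pos.2 (hz.1.trans hz.2)).le
  have hp : 0 ≤ p := hd.le.trans (sub_nonneg.1 hpd)
  have hc : 0 ≤ p - b * (p - d) := sub_nonneg.2 hbd
  have hβ0 : 0 ≤ β := (Real.rpow_le_rpow_left_iff hb).1 <| by
    rw [Real.rpow_zero, hβ]
    exact (one_le_inv₀ ha).2 (h.multiplier_le_ratio.trans h.ratio_lt_one.le)
  obtain ⟨n, ⟨hwc, hwd⟩, hdist⟩ := exists_iterate_mem_Ioc hb hf hz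
  have hw : 0 ≤ f^[n] z := hc.trans hwc.le
  obtain ⟨l, ⟨hwl, hlw⟩, hlim⟩ := h.exists_tendsto_iterate_div_pow ⟨hw, hwd⟩
  have hl : 0 ≤ l := hw.trans hwl
  have hpw : p - d ≤ p - f^[n] z := sub_le_sub_left hwd p
  have hpw0 : 0 ≤ p - f^[n] z := hpd.trans hpw
  have hscale : (p - z) ^ β * (l / a ^ n) = (p - f^[n] z) ^ β * l := by
    rw [hdist, pow_mul_rpow_of_rpow_eq_inv (zero_le_one.trans hb.le) (sub_nonneg.2 hz.2.le) hβ]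
    ring
  refine ⟨l / a ^ n, ⟨tendsto_iterate_div_pow_of_iterate n hlim, div_nonneg hl (pow_pos ha n).le⟩,
    ?_⟩
  rw [hscale]
  constructor
  · gcongr
    exact hwc.le.trans hwl
  · calc (p - f^[n] z) ^ β * l
        ≤ p ^ β * (f^[n] z * Real.exp (K * f^[n] z / (a * (1 - q)))) := by
          gcongr
          exact sub_le_self p hw
      _ ≤ p ^ β * (d * Real.exp (K * d / (a * (1 - q)))) := by
          gcongr

theorem piecewise_series_iteration_singularity_general {f : ℝ → ℝ} {a b d p K q : ℝ}
    (h : IsKoenigsContraction f a K q d) (hb : 1 < b) (hdp : d < p) (hbd : b * (p - d) < p)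
    (hf : ∀ z ∈ Ioc d p, f z = p - b * (p - z)) :
    ∃ ℓ : ℝ → ℝ,
      (∀ z ∈ Ioo d p, Tendsto (fun L => f^[L] z / a ^ L) atTop (nhds (ℓ z)) ∧ 0 ≤ ℓ z) ∧
      (∃ C : ℝ, ∀ z ∈ Ioo d p, (p - z) ^ (-Real.log a / Real.log b) * ℓ z ≤ C) ∧
      (∃ ε > (0 : ℝ), ∃ δ > (0 : ℝ), ∀ z ∈ Ioo (p - ε) p,
        δ ≤ (p - z) ^ (-Real.log a / Real.log b) * ℓ z) := by
  choose! ℓ hlim hmem using fun z (hz : z ∈ Ioo d p) =>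
    h.exists_tendsto_rpow_mul_mem_Icc hb (rpow_neg_log_div_log h.multiplier_pos hb) hbd.le hf hz
  refine ⟨ℓ, hlim, ⟨_, fun z hz => (hmem z hz).2⟩, p - d, sub_pos.2 hdp, _,
    mul_pos (Real.rpow_pos_of_pos (sub_pos.2 hdp) _) (sub_pos.2 hbd), fun z hz => (hmem z ?_).1⟩
  rwa [sub_sub_cancel] at hz

/-- Iterating a strictly increasing map `f` that equals a power series `g` (with nonnegative
coefficients, `g(0) = 0`, `g'(0) = a ∈ (0,1)`, `g(z) < z` on `(0,d]`) on `[0,d]` and equals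
`1 - b(1-z)` on `(d,1]` (with `b > 1`), after normalizing by `a^L`, yields a function with a
singularity of order `-log_b a` at `z = 1`. -/
theorem piecewise_series_iteration_singularity
    (co : ℕ → ℝ) (g : ℝ → ℝ) (a b d : ℝ)
    (hco : ∀ i, 0 ≤ co i)
    (hg : ∀ z ∈ Set.Icc (0 : ℝ) 1, HasSum (fun i => co i * z ^ i) (g z))
    (hco0 : co 0 = 0) (hco1 : co 1 = a) (ha : 0 < a) (ha1 : a < 1)
    (hglt : ∀ z ∈ Set.Ioc (0 : ℝ) d, g z < z)
    (hb : 1 < b) (hd0 : 0 < d) (hd1 : d < 1) (f : ℝ → ℝ)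
    (hf1 : ∀ z ∈ Set.Icc (0 : ℝ) d, f z = g z)
    (hf2 : ∀ z ∈ Set.Ioc d 1, f z = 1 - b * (1 - z))
    (hmono : StrictMonoOn f (Set.Icc 0 1)) :
    ∃ ℓ : ℝ → ℝ,
      (∀ z ∈ Set.Ioo d 1,
        Tendsto (fun L => f^[L] z / a ^ L) atTop (nhds (ℓ z)) ∧ 0 ≤ ℓ z) ∧
      (∃ Cb : ℝ, ∀ z ∈ Set.Ioo d 1,
        (1 - z) ^ (-Real.log a / Real.log b) * ℓ z ≤ Cb) ∧
      (∃ ε > (0 : ℝ), ∃ δ > (0 : ℝ), ∀ z ∈ Set.Ioo (1 - ε) 1,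
        δ ≤ (1 - z) ^ (-Real.log a / Real.log b) * ℓ z) := by
  subst hco1
  have hsum : ∀ z ∈ Icc 0 d, HasSum (fun i => co i * z ^ i) (f z) := fun z hz =>
    hf1 z hz ▸ hg z ⟨hz.1, hz.2.trans hd1.le⟩
  have hfd : f d < d := hf1 d (right_mem_Icc.2 hd0.le) ▸ hglt d (right_mem_Ioc.2 hd0)
  have h := IsKoenigsContraction.of_hasSum hco hco0 ha hd0 hsum hfd
  have hmono_branch : MonotoneOn f (Icc d 1) :=
    hmono.monotoneOn.mono (Icc_subset_Icc_left hd0.le)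
  exact piecewise_series_iteration_singularity_general h hb hd1
    (h.mul_sub_lt_of_monotoneOn hf2 hd1 hmono_branch) hf2
end

section
/- Let f be given on [0,1] by a convergent power series f(z) = ∑_{i=0}^∞ a_i z^i with a_i ≥ 0 for all i, satisfying a_0 = 0, ∑_{i≥1} a_i = 1, 0 < a_1 < 1, and ∑_i i·a_i < ∞. Then for every integer L ≥ 0 and every z ∈ [0,1]: K_L(z) ≥ (L+1)·f^[L](z). -/
open Filter Set

/-!
Term by term, `aᵢ wⁱ ≤ i aᵢ wⁱ` for `i ≥ 1`, so `f(w) ≤ w f'(w)` for `w ≥ 0`. With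
`w = f^[L] z` and `K_L(z) ≥ (L + 1) w`, the recursion gives
`K_{L+1}(z) = f(w) + K_L(z) f'(w) ≥ f(w) + (L + 1) w f'(w) ≥ (L + 2) f(w)`.
-/

section NonnegPowerSeries

variable {R : Type*} [CommSemiring R] [PartialOrder R] [IsOrderedRing R] [TopologicalSpace R]
  [OrderClosedTopology R] {a : ℕ → R}

lemma hasSum_mul_pow_le_of_le {x y s t : R} (ha : ∀ i, 0 ≤ a i) (hx : 0 ≤ x) (hxy : x ≤ y)
    (hs : HasSum (fun i => a i * x ^ i) s) (ht : HasSum (fun i => a i * y ^ i) t) : s ≤ t :=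
  hasSum_le (fun i => mul_le_mul_of_nonneg_left (pow_le_pow_left₀ hx hxy i) (ha i)) hs ht

lemma mapsTo_Icc_of_hasSum_mul_pow {f : R → R} {r : R} (ha : ∀ i, 0 ≤ a i)
    (hf : ∀ z ∈ Icc 0 r, HasSum (fun i => a i * z ^ i) (f z)) (hr : f r ≤ r) :
    MapsTo f (Icc 0 r) (Icc 0 r) := fun z hz =>
  have hr_mem : r ∈ Icc 0 r := right_mem_Icc.2 (hz.1.trans hz.2)
  ⟨(hf z hz).nonneg fun i => mul_nonneg (ha i) (pow_nonneg hz.1 i),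
    (hasSum_mul_pow_le_of_le ha hz.1 hz.2 (hf z hz) (hf r hr_mem)).trans hr⟩

lemma hasSum_mul_pow_le_mul_deriv [IsTopologicalSemiring R] {z s s' : R} (ha : ∀ i, 0 ≤ a i)
    (ha0 : a 0 = 0) (hz : 0 ≤ z) (hs : HasSum (fun i => a i * z ^ i) s)
    (hs' : HasSum (fun i : ℕ => (i : R) * a i * z ^ (i - 1)) s') : s ≤ z * s' := by
  refine hasSum_le (fun i => ?_) hs (hs'.mul_left z)
  rcases i with _ | i
  · simp [ha0]
  · have hterm : 0 ≤ a (i + 1) * z ^ (i + 1) := mul_nonneg (ha _) (pow_nonneg hz _)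
    have hone_le_cast : (1 : R) ≤ (i + 1 : ℕ) := by
      rw [Nat.cast_succ]; exact le_add_of_nonneg_left i.cast_nonneg
    calc a (i + 1) * z ^ (i + 1)
        ≤ (i + 1 : ℕ) * (a (i + 1) * z ^ (i + 1)) := le_mul_of_one_le_left hterm hone_le_cast
      _ = z * ((i + 1 : ℕ) * a (i + 1) * z ^ (i + 1 - 1)) := by
        rw [Nat.add_sub_cancel]; ring

end NonnegPowerSeries

lemma add_one_mul_iterate_le_of_le_mul {R : Type*} [Semiring R] [PartialOrder R]
    [IsOrderedRing R] {f f' : R → R} {K : ℕ → R → R} {s : Set R} (hmaps : MapsTo f s s)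
    (hle : ∀ w ∈ s, f w ≤ w * f' w) (hf'_nonneg : ∀ w ∈ s, 0 ≤ f' w)
    (hK0 : ∀ z ∈ s, K 0 z = z)
    (hKrec : ∀ L, ∀ z ∈ s, K (L + 1) z = f^[L + 1] z + K L z * f' (f^[L] z))
    (L : ℕ) {z : R} (hz : z ∈ s) : ((L : R) + 1) * f^[L] z ≤ K L z := by
  induction L with
  | zero => simp [hK0 z hz]
  | succ L ih =>
    have hw : f^[L] z ∈ s := hmaps.iterate L hz
    have hL : (0 : R) ≤ L + 1 := add_nonneg L.cast_nonneg zero_le_one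
    rw [hKrec L z hz, Function.iterate_succ_apply']
    set w := f^[L] z
    calc ((L + 1 : ℕ) + 1 : R) * f w
        = f w + ((L : R) + 1) * f w := by rw [Nat.cast_succ, add_one_mul, add_comm]
      _ ≤ f w + ((L : R) + 1) * (w * f' w) := by gcongr; exact hle w hw
      _ = f w + ((L : R) + 1) * w * f' w := by rw [mul_assoc]
      _ ≤ f w + K L z * f' w := by gcongr; exact hf'_nonneg w hw

theorem NTK_ge_iterated_dual_activation_general {R : Type*} [CommSemiring R] [PartialOrder R]
    [IsOrderedRing R] [TopologicalSpace R] [OrderClosedTopology R] [IsTopologicalSemiring R]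
    {a : ℕ → R} {f f' : R → R} {K : ℕ → R → R} {s : Set R} (hs : s ⊆ Ici 0)
    (hmaps : MapsTo f s s) (ha : ∀ i, 0 ≤ a i) (ha0 : a 0 = 0)
    (hf : ∀ z ∈ s, HasSum (fun i => a i * z ^ i) (f z))
    (hf' : ∀ z ∈ s, HasSum (fun i : ℕ => (i : R) * a i * z ^ (i - 1)) (f' z))
    (hK0 : ∀ z ∈ s, K 0 z = z)
    (hKrec : ∀ L, ∀ z ∈ s, K (L + 1) z = f^[L + 1] z + K L z * f' (f^[L] z)) :
    ∀ L : ℕ, ∀ z ∈ s, ((L : R) + 1) * f^[L] z ≤ K L z := by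
  have hle : ∀ w ∈ s, f w ≤ w * f' w := fun w hw =>
    hasSum_mul_pow_le_mul_deriv ha ha0 (hs hw) (hf w hw) (hf' w hw)
  have hf'_nonneg : ∀ w ∈ s, 0 ≤ f' w := fun w hw => (hf' w hw).nonneg fun i =>
    mul_nonneg (mul_nonneg i.cast_nonneg (ha i)) (pow_nonneg (hs hw) _)
  exact fun L _ hz => add_one_mul_iterate_le_of_le_mul hmaps hle hf'_nonneg hK0 hKrec L hz

/-- For a dual activation `f(z) = ∑ aᵢ zⁱ` with nonnegative coefficients, `f(0)=0`, `f(1)=1`,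
`0 < a₁ < 1` and `∑ i·aᵢ < ∞`, the depth-`L` NTK satisfies `K_L(z) ≥ (L+1)·f^[L](z)`
for all `L ≥ 0` and `z ∈ [0,1]`. -/
theorem NTK_ge_iterated_dual_activation
    (a : ℕ → ℝ) (f f' : ℝ → ℝ) (K : ℕ → ℝ → ℝ)
    (ha : ∀ i, 0 ≤ a i)
    (hf : ∀ z ∈ Set.Icc (0 : ℝ) 1, HasSum (fun i => a i * z ^ i) (f z))
    (hf' : ∀ z ∈ Set.Icc (0 : ℝ) 1, HasSum (fun i : ℕ => (i : ℝ) * a i * z ^ (i - 1)) (f' z))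
    (ha0 : a 0 = 0) (hone : HasSum a 1)
    (ha1 : 0 < a 1) (ha1' : a 1 < 1)
    (hsum' : Summable (fun i : ℕ => (i : ℝ) * a i))
    (hK0 : ∀ z, K 0 z = z)
    (hKrec : ∀ L z, K (L + 1) z = f^[L + 1] z + K L z * f' (f^[L] z)) :
    ∀ (L : ℕ), ∀ z ∈ Set.Icc (0 : ℝ) 1, ((L : ℝ) + 1) * f^[L] z ≤ K L z := by
  have hf1 : f 1 = 1 := (hf 1 (by simp)).unique (by simpa only [one_pow, mul_one] using hone)
  exact NTK_ge_iterated_dual_activation_general Icc_subset_Ici_self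
    (mapsTo_Icc_of_hasSum_mul_pow ha hf hf1.le) ha ha0 hf hf' (fun z _ => hK0 z)
    (fun L z _ => hKrec L z)
end

section
/- Let f be given on [0,1] by a convergent power series f(z) = ∑_{i=0}^∞ a_i z^i with a_i ≥ 0 for all i, satisfying a_0 > 0 (f(0) > 0), ∑_i a_i = 1 (f(1) = 1), and 1 < ∑_i i·a_i < ∞ (1 < f'(1) < ∞), and let c ∈ (0,1) be the unique fixed point of f in (0,1) (which exists and satisfies f'(c) < 1). Then for every z ∈ (0,1), lim_{L→∞} K_L(z) = c/(1 - f'(c)), while lim_{L→∞} K_L(1) = ∞. -/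
open Filter Set

/-!
On `[0, 1]` the function `f` is increasing and strictly convex with fixed points `c < 1`. The secant
through these two fixed points has slope `1`, so strict convexity gives `f' c < 1 < f' 1`, and makes
`f` a contraction towards `c` on `[0, w]` for every `w ∈ (c, 1)`. Hence the iterates of any `z < 1`
tend to `c`, and the recursion for `K L z` becomes, in the limit, the contracting affine recursion
`k ↦ c + k * f' c`, whose fixed point is `c / (1 - f' c)`. At `z = 1` the recursion is
`k ↦ 1 + k * f' 1`, which expands.
-/

section Recursion

lemma tendsto_zero_of_le_mul_add {e d : ℕ → ℝ} {q : ℝ} (hq0 : 0 ≤ q) (hq1 : q < 1)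
    (he : ∀ n, 0 ≤ e n) (hle : ∀ᶠ n in atTop, e (n + 1) ≤ q * e n + d n)
    (hd : Tendsto d atTop (nhds 0)) : Tendsto e atTop (nhds 0) := by
  refine tendsto_order.2 ⟨fun a ha => .of_forall fun n => ha.trans_le (he n), fun ε hε => ?_⟩
  have hδ : 0 < (1 - q) * (ε / 2) := mul_pos (sub_pos.2 hq1) (half_pos hε)
  obtain ⟨N, hN⟩ := eventually_atTop.1 (hle.and (hd.eventually_lt_const hδ))
  -- Once `d n ≤ (1 - q) * (ε / 2)`, the shifted sequence `e n - ε / 2` is dominated geometrically.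
  have hgeom (m : ℕ) : e (m + N) - ε / 2 ≤ q ^ m * (e (0 + N) - ε / 2) := by
    refine le_geom (u := fun k => e (k + N) - ε / 2) hq0 m fun k _ => ?_
    obtain ⟨hstep, hdk⟩ := hN (k + N) (Nat.le_add_left N k)
    rw [add_right_comm]
    linarith
  have hpow : Tendsto (fun m : ℕ => q ^ m * (e (0 + N) - ε / 2)) atTop (nhds 0) := by
    simpa only [zero_mul] using (tendsto_pow_atTop_nhds_zero_of_lt_one hq0 hq1).mul_const _
  rw [← map_add_atTop_eq_nat N, eventually_map]
  filter_upwards [hpow.eventually_lt_const (half_pos hε)] with m hm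
  linarith [hgeom m]

lemma tendsto_of_affine_recursion {𝕜 : Type*} [NormedField 𝕜] {u b r : ℕ → 𝕜} {β ρ : 𝕜}
    (hρ : ‖ρ‖ < 1) (hu : ∀ n, u (n + 1) = b n + u n * r n)
    (hb : Tendsto b atTop (nhds β)) (hr : Tendsto r atTop (nhds ρ)) :
    Tendsto u atTop (nhds (β / (1 - ρ))) := by
  set k := β / (1 - ρ)
  have hρ1 : 1 - ρ ≠ 0 := sub_ne_zero.2 fun h => by simp [← h] at hρ
  have hk : β + k * ρ - k = 0 := by linear_combination -div_mul_cancel₀ β hρ1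
  have hdefect : Tendsto (fun n => ‖b n + k * r n - k‖) atTop (nhds 0) := by
    simpa only [hk, norm_zero] using ((hb.add (hr.const_mul k)).sub_const k).norm
  obtain ⟨q, hρq, hq1⟩ := exists_between hρ
  rw [tendsto_iff_norm_sub_tendsto_zero]
  refine tendsto_zero_of_le_mul_add ((norm_nonneg ρ).trans hρq.le) hq1
    (fun n => norm_nonneg _) ?_ hdefect
  filter_upwards [hr.norm.eventually_lt_const hρq] with n hrn
  calc ‖u (n + 1) - k‖ = ‖r n * (u n - k) + (b n + k * r n - k)‖ := by rw [hu]; ring_nf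
    _ ≤ ‖r n‖ * ‖u n - k‖ + ‖b n + k * r n - k‖ :=
      (norm_add_le _ _).trans_eq (by rw [norm_mul])
    _ ≤ q * ‖u n - k‖ + ‖b n + k * r n - k‖ := by gcongr

lemma tendsto_iterate_of_dist_le_mul {α : Type*} [PseudoMetricSpace α] {f : α → α} {s : Set α}
    {c z : α} {ρ : ℝ} (hρ0 : 0 ≤ ρ) (hρ1 : ρ < 1) (hs : MapsTo f s s)
    (hf : ∀ y ∈ s, dist (f y) c ≤ ρ * dist y c) (hz : z ∈ s) :
    Tendsto (fun n : ℕ => f^[n] z) atTop (nhds c) := by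
  refine tendsto_iff_dist_tendsto_zero.2 <|
    tendsto_zero_of_le_mul_add hρ0 hρ1 (fun _ => dist_nonneg) (.of_forall fun n => ?_)
      tendsto_const_nhds
  rw [Function.iterate_succ_apply', add_zero]
  exact hf _ (hs.iterate n hz)

end Recursion

section Convex

variable {f f' : ℝ → ℝ} {s : Set ℝ} {b c w x y z : ℝ}

lemma abs_sub_le_slope_mul_of_convexOn (hconv : ConvexOn ℝ s f) (hmono : MonotoneOn f s)
    (hc : c ∈ s) (hw : w ∈ s) (hcw : c < w) (hy : y ∈ s) (hyw : y ≤ w) :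
    |f y - f c| ≤ slope f c w * |y - c| := by
  obtain rfl | hyc := eq_or_ne y c
  · simp
  have hslope : slope f c y ≤ slope f c w := hconv.slope_mono hc ⟨hy, hyc⟩ ⟨hw, hcw.ne'⟩ hyw
  calc |f y - f c| = slope f c y * |y - c| := by
        rw [← abs_of_nonneg (hmono.slope_nonneg hc hy), ← abs_mul, mul_comm, ← smul_eq_mul,
          sub_smul_slope, vsub_eq_sub]
    _ ≤ slope f c w * |y - c| := by gcongr

lemma slope_lt_one_of_strictConvexOn (hconv : StrictConvexOn ℝ s f) (hc : c ∈ s) (hx : x ∈ s)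
    (hb : b ∈ s) (hfc : c ≤ f c) (hfb : f b ≤ b) (hcx : c < x) (hxb : x < b) :
    slope f c x < 1 := by
  have hcb : c < b := hcx.trans hxb
  calc slope f c x < slope f c b := by
        simpa only [slope_def_field] using
          hconv.secant_strict_mono hc hx hb hcx.ne' hcb.ne' hxb
    _ ≤ 1 := by
        rw [slope_def_field]
        exact div_le_one_of_le₀ (sub_le_sub hfb hfc) (sub_nonneg.2 hcb.le)

lemma mem_uIcc_of_monotoneOn_of_abs_sub_le (hmono : MonotoneOn f s) (hc : c ∈ s) (hy : y ∈ s)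
    (hfc : f c = c) (hle : |f y - c| ≤ |y - c|) : f y ∈ uIcc c y := by
  rw [mem_uIcc]
  rcases le_total c y with hcy | hyc
  · have hcf : c ≤ f y := hfc ▸ hmono hc hy hcy
    rw [abs_of_nonneg (sub_nonneg.2 hcf), abs_of_nonneg (sub_nonneg.2 hcy)] at hle
    exact .inl ⟨hcf, by linarith⟩
  · have hfc' : f y ≤ c := hfc ▸ hmono hy hc hyc
    rw [abs_of_nonpos (sub_nonpos.2 hfc'), abs_of_nonpos (sub_nonpos.2 hyc)] at hle
    exact .inr ⟨by linarith, hfc'⟩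

lemma tendsto_iterate_of_strictConvexOn (hconv : StrictConvexOn ℝ s f) (hmono : MonotoneOn f s)
    (hc : c ∈ s) (hb : b ∈ s) (hfc : f c = c) (hfb : f b ≤ b) (hcb : c < b)
    (hz : z ∈ s) (hzb : z < b) : Tendsto (fun n : ℕ => f^[n] z) atTop (nhds c) := by
  obtain ⟨w, hzcw, hwb⟩ := exists_between (max_lt hzb hcb)
  obtain ⟨hzw, hcw⟩ := max_lt_iff.1 hzcw
  have hs : OrdConnected s := hconv.1.ordConnected
  have hw : w ∈ s := hs.out hc hb ⟨hcw.le, hwb.le⟩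
  have hslope0 : 0 ≤ slope f c w := hmono.slope_nonneg hc hw
  have hslope1 : slope f c w < 1 :=
    slope_lt_one_of_strictConvexOn hconv hc hw hb hfc.ge hfb hcw hwb
  have hcontr : ∀ y ∈ s ∩ Iic w, |f y - c| ≤ slope f c w * |y - c| := fun y hy => by
    simpa only [hfc] using
      abs_sub_le_slope_mul_of_convexOn hconv.convexOn hmono hc hw hcw hy.1 hy.2
  refine tendsto_iterate_of_dist_le_mul hslope0 hslope1 (s := s ∩ Iic w) (fun y hy => ?_)
    hcontr ⟨hz, hzw.le⟩
  exact (hs.inter ordConnected_Iic).uIcc_subset ⟨hc, hcw.le⟩ hy <|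
    mem_uIcc_of_monotoneOn_of_abs_sub_le hmono hc hy.1 hfc <|
      (hcontr y hy).trans (mul_le_of_le_one_left (abs_nonneg _) hslope1.le)

lemma strictMonoOn_deriv_of_strictConvexOn (hconv : StrictConvexOn ℝ s f)
    (hf' : ∀ x ∈ s, HasDerivWithinAt f (f' x) s x) : StrictMonoOn f' s :=
  fun x hx y hy hxy => (hconv.lt_slope_of_hasDerivWithinAt hx hy hxy (hf' x hx)).trans
    (hconv.slope_lt_of_hasDerivWithinAt hx hy hxy (hf' y hy))

lemma continuousAt_deriv_of_strictConvexOn (hconv : StrictConvexOn ℝ s f)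
    (hf' : ∀ x ∈ s, HasDerivWithinAt f (f' x) s x) (hs : s ∈ nhds x) : ContinuousAt f' x := by
  have hstrict : StrictMonoOn f' s := strictMonoOn_deriv_of_strictConvexOn hconv hf'
  obtain ⟨l, hl, hlx⟩ : (s ∩ Iio x).Nonempty :=
    nonempty_of_mem (inter_mem (mem_nhdsWithin_of_mem_nhds hs) (self_mem_nhdsWithin (a := x)))
  obtain ⟨u, hu, hxu⟩ : (s ∩ Ioi x).Nonempty :=
    nonempty_of_mem (inter_mem (mem_nhdsWithin_of_mem_nhds hs) (self_mem_nhdsWithin (a := x)))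
  have hx : x ∈ s := mem_of_mem_nhds hs
  -- By Darboux's theorem the increasing function `f'` omits no value, hence cannot jump.
  have hdarboux : OrdConnected (f' '' s) := hconv.1.ordConnected.image_hasDerivWithinAt hf'
  refine hstrict.continuousAt_of_image_mem_nhds hs <|
    mem_of_superset (Icc_mem_nhds (hstrict hl hx hlx) (hstrict hx hu hxu)) ?_
  exact hdarboux.out (mem_image_of_mem f' hl) (mem_image_of_mem f' hu)

end Convex

section PowerSeries

variable {a : ℕ → ℝ} {f : ℝ → ℝ} {s : Set ℝ}

lemma monotoneOn_of_hasSum_pow (hs : s ⊆ Ici 0) (ha : ∀ i, 0 ≤ a i)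
    (hf : ∀ z ∈ s, HasSum (fun i => a i * z ^ i) (f z)) : MonotoneOn f s :=
  fun x hx y hy hxy => hasSum_le
    (fun i => mul_le_mul_of_nonneg_left (pow_le_pow_left₀ (hs hx) hxy i) (ha i)) (hf x hx) (hf y hy)

lemma strictConvexOn_of_hasSum_pow (hconv : Convex ℝ s) (hs : s ⊆ Ici 0) (ha : ∀ i, 0 ≤ a i)
    (ha2 : ∃ j, 2 ≤ j ∧ 0 < a j) (hf : ∀ z ∈ s, HasSum (fun i => a i * z ^ i) (f z)) :
    StrictConvexOn ℝ s f := by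
  obtain ⟨j, hj, haj⟩ := ha2
  refine ⟨hconv, fun x hx y hy hxy p q hp hq hpq => ?_⟩
  have hcomb : HasSum (fun i => a i * (p • x ^ i + q • y ^ i)) (p • f x + q • f y) := by
    convert! ((hf x hx).const_smul p).add ((hf y hy).const_smul q) using 2 with i
    simp only [smul_eq_mul]
    ring
  refine hasSum_lt (i := j) (fun i => ?_) ?_ (hf _ (hconv hx hy hp.le hq.le hpq)) hcomb
  · exact mul_le_mul_of_nonneg_left
      ((convexOn_pow i).2 (hs hx) (hs hy) hp.le hq.le hpq) (ha i)
  · exact mul_lt_mul_of_pos_left ((strictConvexOn_pow hj).2 (hs hx) (hs hy) hxy hp hq hpq) haj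

lemma abs_slope_pow_le {x y : ℝ} (hx : |x| ≤ 1) (hy : |y| ≤ 1) (i : ℕ) :
    |slope (fun t : ℝ => t ^ i) x y| ≤ i := by
  rw [slope_def_field, abs_div]
  refine div_le_of_le_mul₀ (abs_nonneg _) i.cast_nonneg ?_
  calc |y ^ i - x ^ i| ≤ |y - x| * i * max |y| |x| ^ (i - 1) := abs_pow_sub_pow_le ..
    _ ≤ |y - x| * i * 1 := by
      gcongr
      exact pow_le_one₀ (le_max_of_le_left (abs_nonneg y)) (max_le hy hx)
    _ = i * |y - x| := by ring

lemma hasDerivWithinAt_of_hasSum_pow {x d : ℝ} (hs : ∀ z ∈ s, |z| ≤ 1)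
    (ha : Summable fun i : ℕ => (i : ℝ) * |a i|)
    (hf : ∀ z ∈ s, HasSum (fun i => a i * z ^ i) (f z)) (hx : x ∈ s)
    (hd : HasSum (fun i : ℕ => (i : ℝ) * a i * x ^ (i - 1)) d) : HasDerivWithinAt f d s x := by
  rw [hasDerivWithinAt_iff_tendsto_slope]
  have hslope : ∀ z ∈ s, ∑' i, a i * slope (fun t : ℝ => t ^ i) x z = slope f x z := fun z hz => by
    rw [slope_def_field, ← (((hf z hz).sub (hf x hx)).div_const (z - x)).tsum_eq]
    refine tsum_congr fun i => ?_
    rw [slope_def_field]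
    ring
  have hterm (i : ℕ) : Tendsto (fun z => a i * slope (fun t : ℝ => t ^ i) x z)
      (nhdsWithin x (s \ {x})) (nhds ((i : ℝ) * a i * x ^ (i - 1))) := by
    rw [mul_comm (i : ℝ), mul_assoc]
    exact (hasDerivWithinAt_iff_tendsto_slope.1 (hasDerivAt_pow i x).hasDerivWithinAt).const_mul _
  have hbound : ∀ z ∈ s, ∀ i, ‖a i * slope (fun t : ℝ => t ^ i) x z‖ ≤ i * |a i| := fun z hz i => by
    rw [Real.norm_eq_abs, abs_mul, mul_comm]
    gcongr
    exact abs_slope_pow_le (hs x hx) (hs z hz) i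
  have hmem : ∀ᶠ z in nhdsWithin x (s \ {x}), z ∈ s :=
    eventually_mem_nhdsWithin.mono fun z hz => hz.1
  rw [← hd.tsum_eq]
  exact (tendsto_tsum_of_dominated_convergence ha hterm (hmem.mono hbound)).congr'
    (hmem.mono hslope)

lemma exists_two_le_pos_of_hasSum_lt {p m : ℝ} (ha : ∀ i, 0 ≤ a i) (hp : HasSum a p)
    (hm : HasSum (fun i : ℕ => (i : ℝ) * a i) m) (hpm : p < m) : ∃ j, 2 ≤ j ∧ 0 < a j := by
  by_contra! h
  refine hpm.not_ge (hasSum_le (fun i => ?_) hm hp)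
  rcases lt_or_ge i 2 with hi | hi
  · exact mul_le_of_le_one_left (ha i) (by exact_mod_cast Nat.lt_succ_iff.1 hi)
  · rw [le_antisymm (h i hi) (ha i), mul_zero]

end PowerSeries

theorem chaotic_phase_NTK_limits_general {f f' : ℝ → ℝ} {K : ℕ → ℝ → ℝ} {c : ℝ}
    (hconv : StrictConvexOn ℝ (Icc 0 1) f) (hmono : MonotoneOn f (Icc 0 1))
    (hf' : ∀ z ∈ Icc (0 : ℝ) 1, HasDerivWithinAt f (f' z) (Icc 0 1) z)
    (hf1 : f 1 = 1) (hc : c ∈ Ioo (0 : ℝ) 1) (hfc : f c = c) (hK0 : 0 < K 0 1)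
    (hKrec : ∀ L z, K (L + 1) z = f^[L + 1] z + K L z * f' (f^[L] z)) :
    (∀ z ∈ Ico (0 : ℝ) 1, Tendsto (fun L : ℕ => K L z) atTop (nhds (c / (1 - f' c)))) ∧
    Tendsto (fun L : ℕ => K L 1) atTop atTop := by
  have hcI : c ∈ Icc (0 : ℝ) 1 := Ioo_subset_Icc_self hc
  have h0I : (0 : ℝ) ∈ Icc (0 : ℝ) 1 := left_mem_Icc.2 zero_le_one
  have h1I : (1 : ℝ) ∈ Icc (0 : ℝ) 1 := right_mem_Icc.2 zero_le_one
  have hslope : slope f c 1 = 1 := by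
    rw [slope_def_field, hf1, hfc, div_self (sub_pos.2 hc.2).ne']
  refine ⟨fun z hz => ?_, ?_⟩
  · have hIc : Icc (0 : ℝ) 1 ∈ nhds c := Icc_mem_nhds hc.1 hc.2
    have hc0 : 0 ≤ f' c :=
      (hmono.slope_nonneg h0I hcI).trans <|
        hconv.convexOn.slope_le_of_hasDerivWithinAt h0I hcI hc.1 (hf' c hcI)
    have hc1 : f' c < 1 := hslope ▸
      hconv.lt_slope_of_hasDerivWithinAt hcI h1I hc.2 (hf' c hcI)
    have hiter : Tendsto (fun L : ℕ => f^[L] z) atTop (nhds c) :=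
      tendsto_iterate_of_strictConvexOn hconv hmono hcI h1I hfc hf1.le hc.2
        (Ico_subset_Icc_self hz) hz.2
    have hcont : ContinuousAt f' c := continuousAt_deriv_of_strictConvexOn hconv hf' hIc
    exact tendsto_of_affine_recursion (by rwa [Real.norm_of_nonneg hc0]) (fun L => hKrec L z)
      (hiter.comp (tendsto_add_atTop_nat 1)) (hcont.tendsto.comp hiter)
  · have h1 : 1 < f' 1 := hslope.ge.trans_lt <|
      hconv.slope_lt_of_hasDerivWithinAt hcI h1I hc.2 (hf' 1 h1I)
    refine tendsto_atTop_of_geom_le hK0 h1 fun L => ?_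
    rw [hKrec, Function.iterate_fixed hf1, Function.iterate_fixed hf1]
    linarith

/-- Chaotic phase NTK limits (from Lemma 7 of the paper): for a dual activation
`f(z) = ∑ aᵢ zⁱ` with nonnegative coefficients, `f(0) > 0`, `f(1) = 1`,
`1 < f'(1) = ∑ i·aᵢ < ∞`, and `c ∈ (0,1)` the fixed point of `f`, the depth-`L` NTK
satisfies `K_L(z) → c/(1 - f'(c))` for all `z ∈ (0,1)`, while `K_L(1) → ∞`. -/
theorem chaotic_phase_NTK_limits
    (a : ℕ → ℝ) (f f' : ℝ → ℝ) (K : ℕ → ℝ → ℝ) (C : ℝ)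
    (ha : ∀ i, 0 ≤ a i)
    (hf : ∀ z ∈ Set.Icc (0 : ℝ) 1, HasSum (fun i => a i * z ^ i) (f z))
    (hf' : ∀ z ∈ Set.Icc (0 : ℝ) 1, HasSum (fun i : ℕ => (i : ℝ) * a i * z ^ (i - 1)) (f' z))
    (ha0 : 0 < a 0) (hone : HasSum a 1)
    (hC : HasSum (fun i : ℕ => (i : ℝ) * a i) C) (hC1 : 1 < C)
    (hK0 : ∀ z, K 0 z = z)
    (hKrec : ∀ L z, K (L + 1) z = f^[L + 1] z + K L z * f' (f^[L] z))
    (c : ℝ) (hc : c ∈ Set.Ioo (0 : ℝ) 1) (hfc : f c = c) :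
    (∀ z ∈ Set.Ioo (0 : ℝ) 1,
      Tendsto (fun L : ℕ => K L z) atTop (nhds (c / (1 - f' c)))) ∧
    Tendsto (fun L : ℕ => K L 1) atTop atTop := by
  have hpos : Icc (0 : ℝ) 1 ⊆ Ici 0 := Icc_subset_Ici_self
  have hconv : StrictConvexOn ℝ (Icc 0 1) f := strictConvexOn_of_hasSum_pow (convex_Icc 0 1)
    hpos ha (exists_two_le_pos_of_hasSum_lt ha hone hC hC1) hf
  have hderiv : ∀ z ∈ Icc (0 : ℝ) 1, HasDerivWithinAt f (f' z) (Icc 0 1) z := fun z hz =>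
    hasDerivWithinAt_of_hasSum_pow (fun x hx => (abs_of_nonneg hx.1).trans_le hx.2)
      (by simpa only [abs_of_nonneg (ha _)] using hC.summable) hf hz (hf' z hz)
  have hf1 : f 1 = 1 :=
    (hf 1 (right_mem_Icc.2 zero_le_one)).unique (by simpa only [one_pow, mul_one] using hone)
  obtain ⟨hlim, htop⟩ := chaotic_phase_NTK_limits_general hconv
    (monotoneOn_of_hasSum_pow hpos ha hf) hderiv hf1 hc hfc (by simp [hK0]) hKrec
  exact ⟨fun z hz => hlim z (Ioo_subset_Ico_self hz), htop⟩
end
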